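/- Let w be a weight function with w(0) = 0, w(1) = 1 and w(2) = 1 + x for some rational x with 0 < x ≤ 1. Let U = {u_1, …, u_{3q}} with q even and q ≥ 4, and let E = {e_1, …, e_m} be a collection of 3-element subsets of U. Consider the candidate set C = U ∪ {c, d, z} and the linear partial profile consisting of: for each e ∈ E, a voter v_e with Top(v_e) = ∅, Middle(v_e) = e ∪ {c} equipped with a linear order that ranks c last (and the three elements of e above c in some order), and Bottom(v_e) = (U ∖ e) ∪ {d, z}; together with 2q + 1 voters with empty Middle: q/2 voters with Top = {z}, q/2 voters with Top = {z} ∪ U, q/2 voters with Top = {d}, q/2 voters with Top = {d} ∪ U, and one voter with Top = {c, d, z}. Then {c, d} is a possible committee of size 2 under w-Thiele if and only if there exist q pairwise disjoint sets in E whose union is U. -/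

import Mathlib

open Finset

/-- The `w`-Thiele score of a set `S` under approval profile `A`. -/
def thieleScore {V C : Type*} [Fintype V] [DecidableEq C]
    (w : ℕ → ℚ) (A : V → Finset C) (S : Finset C) : ℚ :=
  ∑ v, w ((S ∩ A v).card)

/-- `W` is a winning committee of size `k` under `w`-Thiele in `A`. -/
def IsWinning {V C : Type*} [Fintype V] [DecidableEq C]
    (w : ℕ → ℚ) (k : ℕ) (A : V → Finset C) (W : Finset C) : Prop :=
  W.card = k ∧ ∀ W' : Finset C, W'.card = k → thieleScore w A W' ≤ thieleScore w A W

/-- `A` is a completion of the linear partial profile given by `Top` and the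
linear orders `ord` on the middle candidates: each voter approves `Top v`
together with a prefix of `ord v`. -/
def IsLinCompletion {V C : Type*} [DecidableEq C] (Top : V → Finset C) (ord : V → List C)
    (A : V → Finset C) : Prop :=
  ∀ v, ∃ j, A v = Top v ∪ ((ord v).take j).toFinset

/-- Candidates: `Sum.inl u` for the elements `u ∈ U`, and `Sum.inr 0 = c`,
`Sum.inr 1 = d`, `Sum.inr 2 = z`.
Voters: `Sum.inl i` is the voter `v_{e_i}`, with `Top = ∅`;
`Sum.inr (Sum.inl (0,s))` are the `q/2` voters approving `{z}`;
`Sum.inr (Sum.inl (1,s))` are the `q/2` voters approving `{z} ∪ U`;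
`Sum.inr (Sum.inl (2,s))` are the `q/2` voters approving `{d}`;
`Sum.inr (Sum.inl (3,s))` are the `q/2` voters approving `{d} ∪ U`;
`Sum.inr (Sum.inr ())` is the voter approving `{c, d, z}`.
Here `p = q/2`. -/
def redTop8 (U : Type*) [Fintype U] [DecidableEq U] (m p : ℕ) :
    Fin m ⊕ (Fin 4 × Fin p) ⊕ Unit → Finset (U ⊕ Fin 3)
  | Sum.inl _ => ∅
  | Sum.inr (Sum.inl (j, _)) =>
      if j.val = 0 then {Sum.inr 2}
      else if j.val = 1 then insert (Sum.inr 2) (Finset.univ.image (Sum.inl : U → U ⊕ Fin 3))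
      else if j.val = 2 then {Sum.inr 1}
      else insert (Sum.inr 1) (Finset.univ.image (Sum.inl : U → U ⊕ Fin 3))
  | Sum.inr (Sum.inr _) => {Sum.inr 0, Sum.inr 1, Sum.inr 2}


/-- The value of a pair in terms of two membership statements. -/
def pairVal8 (x : ℚ) (P Q : Prop) [Decidable P] [Decidable Q] : ℚ :=
  if P then (if Q then 1 + x else 1) else (if Q then 1 else 0)

theorem pair_weight8 {C : Type*} [DecidableEq C] (w : ℕ → ℚ) (hw0 : w 0 = 0) (hw1 : w 1 = 1)
    (x : ℚ) (hw2 : w 2 = 1 + x) (a b : C) (hab : a ≠ b) (X : Finset C) :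
    w ((({a, b} : Finset C) ∩ X).card) = pairVal8 x (a ∈ X) (b ∈ X) := by
  unfold pairVal8
  by_cases ha : a ∈ X <;> by_cases hb : b ∈ X <;>
    simp [Finset.insert_inter_of_mem, Finset.insert_inter_of_notMem,
      Finset.singleton_inter_of_mem, Finset.singleton_inter_of_notMem, ha, hb, hab, hw0, hw1, hw2]

theorem score8 {U : Type*} [Fintype U] [DecidableEq U]
    (w : ℕ → ℚ) (hw0 : w 0 = 0) (hw1 : w 1 = 1)
    (x : ℚ) (hw2 : w 2 = 1 + x) (m p : ℕ)
    (A : Fin m ⊕ (Fin 4 × Fin p) ⊕ Unit → Finset (U ⊕ Fin 3))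
    (hA : ∀ v, A (Sum.inr v) = redTop8 U m p (Sum.inr v))
    (a b : U ⊕ Fin 3) (hab : a ≠ b) :
    thieleScore w A {a, b} =
      ∑ i, pairVal8 x (a ∈ A (Sum.inl i)) (b ∈ A (Sum.inl i))
      + p * (pairVal8 x (a = Sum.inr 2) (b = Sum.inr 2)
        + pairVal8 x (a = Sum.inr 2 ∨ a.isLeft) (b = Sum.inr 2 ∨ b.isLeft)
        + pairVal8 x (a = Sum.inr 1) (b = Sum.inr 1)
        + pairVal8 x (a = Sum.inr 1 ∨ a.isLeft) (b = Sum.inr 1 ∨ b.isLeft))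
      + pairVal8 x (a.isRight) (b.isRight) := by
  have hl : ∀ a : U ⊕ Fin 3, (∃ y, Sum.inl y = a) ↔ a.isLeft := by
    intro a; cases a <;> simp
  have hr : ∀ a : U ⊕ Fin 3, (a = Sum.inr 0 ∨ a = Sum.inr 1 ∨ a = Sum.inr 2) ↔ a.isRight := by
    intro a
    rcases a with a | a
    · simp
    · fin_cases a <;> simp
  unfold thieleScore
  simp only [pair_weight8 w hw0 hw1 x hw2 a b hab]
  rw [Fintype.sum_sum_type, Fintype.sum_sum_type, Fintype.sum_prod_type]
  simp only [hA, redTop8, Fin.sum_univ_four]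
  simp [hl, hr]
  ring

theorem last_take8 {α : Type*} (l : List α) (c : α) (hnd : l.Nodup)
    (hlast : l.getLast? = some c) (j : ℕ) (hc : c ∈ l.take j) : l.take j = l := by
  obtain ⟨l', rfl⟩ := List.getLast?_eq_some_iff.1 hlast
  by_cases hj : j ≤ l'.length
  · rw [List.take_append_of_le_length hj] at hc
    have := List.mem_of_mem_take hc
    rw [List.nodup_append] at hnd
    exact absurd rfl (hnd.2.2 c this c (by simp))
  · apply List.take_of_length_le
    simp; omega

theorem stmt8 {U : Type*} [Fintype U] [DecidableEq U]
    (w : ℕ → ℚ) (hwmono : Monotone w) (hw0 : w 0 = 0) (hw1 : w 1 = 1)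
    (x : ℚ) (hx0 : 0 < x) (hx1 : x ≤ 1) (hw2 : w 2 = 1 + x)
    (p : ℕ) (hp : 2 ≤ p)   -- `q = 2 * p`, so `q` is even and `q ≥ 4`
    (hU : Fintype.card U = 3 * (2 * p))
    (m : ℕ) (e : Fin m → Finset U) (he : ∀ i, (e i).card = 3)
    -- the linear order on `Middle(v_{e_i}) = e_i ∪ {c}`, ranking `c` last:
    (L : Fin m → List (U ⊕ Fin 3))
    (hLnd : ∀ i, (L i).Nodup)
    (hLset : ∀ i, (L i).toFinset = (e i).image Sum.inl ∪ {Sum.inr 0})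
    (hLlast : ∀ i, (L i).getLast? = some (Sum.inr 0))
    -- the full order function: voters other than the `v_{e_i}` have empty middle
    (ordV : Fin m ⊕ (Fin 4 × Fin p) ⊕ Unit → List (U ⊕ Fin 3))
    (hordV : ∀ i, ordV (Sum.inl i) = L i)
    (hordV' : ∀ v, (∀ i, v ≠ Sum.inl i) → ordV v = []) :
    (∃ A : Fin m ⊕ (Fin 4 × Fin p) ⊕ Unit → Finset (U ⊕ Fin 3),
        IsLinCompletion (redTop8 U m p) ordV A ∧
        IsWinning w 2 A {Sum.inr 0, Sum.inr 1}) ↔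
    (∃ B : Finset (Fin m), B.card = 2 * p ∧
        (∀ i ∈ B, ∀ j ∈ B, i ≠ j → Disjoint (e i) (e j)) ∧
        B.biUnion e = Finset.univ) := by
  have hcd : (Sum.inr 0 : U ⊕ Fin 3) ≠ Sum.inr 1 := by simp
  have hp' : (2 : ℚ) ≤ p := by exact_mod_cast hp
  constructor
  · rintro ⟨A, hA, -, hwin⟩
    have hAr : ∀ v, A (Sum.inr v) = redTop8 U m p (Sum.inr v) := by
      intro v
      obtain ⟨j, hj⟩ := hA (Sum.inr v)
      rw [hj, hordV' _ (by simp)]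
      simp
    have hAl : ∀ i, ∃ j, A (Sum.inl i) = ((L i).take j).toFinset := by
      intro i
      obtain ⟨j, hj⟩ := hA (Sum.inl i)
      refine ⟨j, ?_⟩
      rw [hj, hordV]
      simp [redTop8]
    have hfull : ∀ i, Sum.inr 0 ∈ A (Sum.inl i) →
        A (Sum.inl i) = (e i).image Sum.inl ∪ {Sum.inr 0} := by
      intro i hi
      obtain ⟨j, hj⟩ := hAl i
      rw [hj] at hi ⊢
      rw [last_take8 _ _ (hLnd i) (hLlast i) j (by simpa using hi), hLset]
    have hsub : ∀ i y, y ∈ A (Sum.inl i) → y ∈ (e i).image Sum.inl ∪ {(Sum.inr 0 : U ⊕ Fin 3)} := by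
      intro i y hy
      obtain ⟨j, hj⟩ := hAl i
      rw [← hLset]
      rw [hj] at hy
      simp only [List.mem_toFinset] at hy ⊢
      exact List.mem_of_mem_take hy
    have hd : ∀ i, Sum.inr 1 ∉ A (Sum.inl i) := by
      intro i h
      simpa using hsub i _ h
    have hz : ∀ i, Sum.inr 2 ∉ A (Sum.inl i) := by
      intro i h
      simpa using hsub i _ h
    set B : Finset (Fin m) := univ.filter (fun i => Sum.inr 0 ∈ A (Sum.inl i)) with hB
    have scd := score8 w hw0 hw1 x hw2 m p A hAr _ _ hcd
    have hb : 2 * p ≤ B.card := by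
      have h := hwin {Sum.inr 1, Sum.inr 2} (by simp)
      rw [scd, score8 w hw0 hw1 x hw2 m p A hAr _ _ (by simp)] at h
      simp [pairVal8, hd, hz] at h
      have : (2 * p : ℚ) ≤ B.card := by
        rw [hB]
        linarith
      exact_mod_cast this
    have hdeg : ∀ u, (B.filter (fun i => u ∈ e i)).card ≤ 1 := by
      intro u
      have h := hwin {Sum.inr 0, Sum.inl u} (by simp)
      rw [scd, score8 w hw0 hw1 x hw2 m p A hAr _ _ (by simp)] at h
      have hlow : (∑ i, pairVal8 x (Sum.inr 0 ∈ A (Sum.inl i)) (Sum.inl u ∈ A (Sum.inl i)))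
          ≥ (B.card : ℚ) + x * (B.filter (fun i => u ∈ e i)).card := by
        rw [hB, Finset.filter_filter, Finset.card_filter, Finset.card_filter]
        push_cast
        rw [Finset.mul_sum, ← Finset.sum_add_distrib]
        apply Finset.sum_le_sum
        intro i _
        unfold pairVal8
        by_cases hi : Sum.inr 0 ∈ A (Sum.inl i)
        · have : (Sum.inl u ∈ A (Sum.inl i)) ↔ u ∈ e i := by
            rw [hfull i hi]; simp
          by_cases hu : u ∈ e i <;> simp [hi, this, hu]
        · simp [hi]
          split_ifs <;> norm_num
      have hcdv : (∑ i, pairVal8 x (Sum.inr 0 ∈ A (Sum.inl i)) (Sum.inr 1 ∈ A (Sum.inl i)))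
          = (B.card : ℚ) := by
        simp [pairVal8, hd, hB]
      rw [hcdv] at h
      generalize (∑ i, pairVal8 x (Sum.inr 0 ∈ A (Sum.inl i)) (Sum.inl u ∈ A (Sum.inl i))) = T at *
      simp [pairVal8] at h
      have h2 : x * ((B.filter (fun i => u ∈ e i)).card : ℚ) ≤ x * 1 := by linarith
      have h3 := le_of_mul_le_mul_left h2 hx0
      exact_mod_cast h3
    have hdisj : ∀ i ∈ B, ∀ j ∈ B, i ≠ j → Disjoint (e i) (e j) := by
      intro i hi j hj hij
      rw [Finset.disjoint_left]
      intro u hui huj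
      exact hij (Finset.card_le_one.1 (hdeg u) i (by simp [hi, hui]) j (by simp [hj, huj]))
    have hcard : (B.biUnion e).card = B.card * 3 := by
      rw [Finset.card_biUnion hdisj, Finset.sum_const_nat (fun i _ => he i)]
    have hle := Finset.card_le_univ (B.biUnion e)
    refine ⟨B, by omega, hdisj, ?_⟩
    apply Finset.eq_univ_of_card
    omega
  · rintro ⟨B, hBc, hdisj, hcov⟩
    let A : Fin m ⊕ (Fin 4 × Fin p) ⊕ Unit → Finset (U ⊕ Fin 3) := fun v => match v with
      | Sum.inl i => if i ∈ B then (e i).image Sum.inl ∪ {Sum.inr 0} else ∅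
      | Sum.inr v => redTop8 U m p (Sum.inr v)
    have hAr : ∀ v, A (Sum.inr v) = redTop8 U m p (Sum.inr v) := fun v => rfl
    have hAl : ∀ i, A (Sum.inl i) = if i ∈ B then (e i).image Sum.inl ∪ {Sum.inr 0} else ∅ :=
      fun i => rfl
    have hc : ∀ i, Sum.inr 0 ∈ A (Sum.inl i) ↔ i ∈ B := by
      intro i; rw [hAl]; split_ifs with h <;> simp [h]
    have hd : ∀ i, Sum.inr 1 ∉ A (Sum.inl i) := by
      intro i; rw [hAl]; split_ifs with h <;> simp
    have hz : ∀ i, Sum.inr 2 ∉ A (Sum.inl i) := by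
      intro i; rw [hAl]; split_ifs with h <;> simp
    have hu : ∀ u, ∃ i₀ ∈ B, ∀ i, Sum.inl u ∈ A (Sum.inl i) ↔ i = i₀ := by
      intro u
      have : u ∈ B.biUnion e := by rw [hcov]; simp
      obtain ⟨i₀, hi₀, hui⟩ := Finset.mem_biUnion.1 this
      refine ⟨i₀, hi₀, fun i => ?_⟩
      rw [hAl]
      constructor
      · intro h
        split_ifs at h with hi
        · by_contra hne
          exact (Finset.disjoint_left.1 (hdisj i hi i₀ hi₀ hne)) (by simpa using h) hui
        · simp at h
      · rintro rfl
        simp [hi₀, hui]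
    have hBq : (B.card : ℚ) = 2 * p := by exact_mod_cast hBc
    refine ⟨A, ?_, by simp, ?_⟩
    · rintro (i | v)
      · rw [hordV, hAl]
        by_cases hi : i ∈ B
        · exact ⟨(L i).length, by simp [hi, redTop8, hLset]⟩
        · exact ⟨0, by simp [hi, redTop8]⟩
      · refine ⟨0, ?_⟩
        rw [hAr]; simp
    · have scd : thieleScore w A {Sum.inr 0, Sum.inr 1} = 4 * p + 1 + x := by
        rw [score8 w hw0 hw1 x hw2 m p A hAr _ _ hcd]
        simp [pairVal8, hd, hc, hBq]
        ring
      have key1 : ∀ (u : U) (k : Fin 3), thieleScore w A {Sum.inl u, Sum.inr k} ≤ 4 * p + 1 + x := by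
        intro u k
        obtain ⟨i₀, hi₀, hi⟩ := hu u
        rw [score8 w hw0 hw1 x hw2 m p A hAr _ _ (by simp)]
        fin_cases k
        · have : (∑ i, pairVal8 x (Sum.inl u ∈ A (Sum.inl i)) (Sum.inr 0 ∈ A (Sum.inl i)))
              = 2 * p + x := by
            have h1 : (∑ i, pairVal8 x (Sum.inl u ∈ A (Sum.inl i)) (Sum.inr 0 ∈ A (Sum.inl i)))
              = ∑ i, ((if i ∈ B then (1 : ℚ) else 0) + (if i = i₀ then x else 0)) := by
              apply Finset.sum_congr rfl
              intro i _
              unfold pairVal8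
              simp only [hi, hc]
              by_cases h : i = i₀
              · subst h; simp [hi₀]
              · simp [h]
            rw [h1, Finset.sum_add_distrib]
            simp [hBq]
          simp only [Fin.zero_eta, Fin.isValue, this]
          simp [pairVal8]
          linarith
        · simp [pairVal8, hi, hd]
          nlinarith
        · simp [pairVal8, hi, hz]
          nlinarith
      have key2 : ∀ u v : U, u ≠ v → thieleScore w A {Sum.inl u, Sum.inl v} ≤ 4 * p + 1 + x := by
        intro u v huv
        obtain ⟨i₀, -, hi⟩ := hu u
        obtain ⟨j₀, -, hj⟩ := hu v
        rw [score8 w hw0 hw1 x hw2 m p A hAr _ _ (by simpa using huv)]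
        have : (∑ i, pairVal8 x (Sum.inl u ∈ A (Sum.inl i)) (Sum.inl v ∈ A (Sum.inl i))) ≤ 2 := by
          have h1 : (∑ i, pairVal8 x (Sum.inl u ∈ A (Sum.inl i)) (Sum.inl v ∈ A (Sum.inl i)))
              ≤ ∑ i, ((if i = i₀ then (1 : ℚ) else 0) + (if i = j₀ then 1 else 0)) := by
            apply Finset.sum_le_sum
            intro i _
            unfold pairVal8
            simp only [hi, hj]
            split_ifs <;> linarith
          refine h1.trans ?_
          rw [Finset.sum_add_distrib]
          simp
          norm_num
        generalize (∑ i, pairVal8 x (Sum.inl u ∈ A (Sum.inl i)) (Sum.inl v ∈ A (Sum.inl i))) = T at *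
        simp [pairVal8]
        nlinarith
      have key3 : ∀ k l : Fin 3, k ≠ l → thieleScore w A {Sum.inr k, Sum.inr l} ≤ 4 * p + 1 + x := by
        intro k l hkl
        rw [score8 w hw0 hw1 x hw2 m p A hAr _ _ (by simpa using hkl)]
        fin_cases k <;> fin_cases l <;> first
          | exact absurd rfl hkl
          | (simp [pairVal8, hc, hd, hz, hBq]; linarith)
      intro W' hW'
      rw [scd]
      obtain ⟨a, b, hab, rfl⟩ := Finset.card_eq_two.1 hW'
      rcases a with u | k <;> rcases b with v | l
      · exact key2 u v (by simpa using hab)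
      · exact key1 u l
      · rw [Finset.pair_comm]; exact key1 v k
      · exact key3 k l (by simpa using hab)
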